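/- arXiv:2211.03904 — 8 statements merged into one kernel-verified Lean document; each statement's English description precedes it below -/
import Mathlib

section
/- The generalized x-translation with arbitrary time-dependent coefficient is a symmetry of the potential Kawahara–KP equation in linearized (characteristic) form: if v solves the potential Kawahara–KP equation, f : ℝ → ℝ is any smooth function, and p(t,x,y) := -f(t)·v_x(t,x,y) + x·f'(t) + (1/(2σ))·y²·f''(t), then p satisfies the linearized equation p_tx + v_xx·p_x + v_x·p_xx + β·p_xxxx + p_xxxxxx - σ·p_yy = 0 at every point of ℝ³. -/
/-- Partial derivative in `t` of a function `v (t, x, y)` given in curried form. -/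
noncomputable def pt (v : ℝ → ℝ → ℝ → ℝ) : ℝ → ℝ → ℝ → ℝ :=
  fun t x y => deriv (fun s => v s x y) t

/-- Partial derivative in `x` of a function `v (t, x, y)` given in curried form. -/
noncomputable def px (v : ℝ → ℝ → ℝ → ℝ) : ℝ → ℝ → ℝ → ℝ :=
  fun t x y => deriv (fun s => v t s y) x

/-- Partial derivative in `y` of a function `v (t, x, y)` given in curried form. -/
noncomputable def py (v : ℝ → ℝ → ℝ → ℝ) : ℝ → ℝ → ℝ → ℝ :=
  fun t x y => deriv (fun s => v t x s) y

/-- The potential Kawahara–KP operator: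
`v_tx + v_x·v_xx + β·v_xxxx + v_xxxxxx - σ·v_yy`. -/
noncomputable def KKP (β σ : ℝ) (v : ℝ → ℝ → ℝ → ℝ) : ℝ → ℝ → ℝ → ℝ :=
  fun t x y =>
    px (pt v) t x y + px v t x y * px (px v) t x y
      + β * px (px (px (px v))) t x y
      + px (px (px (px (px (px v))))) t x y
      - σ * py (py v) t x y

/-- The linearization of the potential Kawahara–KP equation at `v`, applied to `p`:
`p_tx + v_xx·p_x + v_x·p_xx + β·p_xxxx + p_xxxxxx - σ·p_yy`. -/
noncomputable def KKPlin (β σ : ℝ) (v p : ℝ → ℝ → ℝ → ℝ) : ℝ → ℝ → ℝ → ℝ :=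
  fun t x y =>
    px (pt p) t x y + px (px v) t x y * px p t x y + px v t x y * px (px p) t x y
      + β * px (px (px (px p))) t x y
      + px (px (px (px (px (px p))))) t x y
      - σ * py (py p) t x y

namespace KKPaux

def S (v : ℝ → ℝ → ℝ → ℝ) : Prop :=
  ContDiff ℝ (⊤ : ℕ∞) (fun q : ℝ × ℝ × ℝ => v q.1 q.2.1 q.2.2)

/-- directional derivative -/
noncomputable def D (e : ℝ × ℝ × ℝ) (v : ℝ → ℝ → ℝ → ℝ) : ℝ → ℝ → ℝ → ℝ :=
  fun t x y => fderiv ℝ (fun q : ℝ × ℝ × ℝ => v q.1 q.2.1 q.2.2) (t, x, y) e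

lemma S.D {v} (h : S v) (e) : S (D e v) := by
  have : ContDiff ℝ (⊤ : ℕ∞) (fderiv ℝ (fun q : ℝ × ℝ × ℝ => v q.1 q.2.1 q.2.2)) :=
    ContDiff.fderiv_right (m := (⊤ : ℕ∞)) h (by simp)
  exact this.clm_apply contDiff_const

lemma D_comm {v} (h : S v) (e e' : ℝ × ℝ × ℝ) : D e (D e' v) = D e' (D e v) := by
  have h1 : ContDiff ℝ (⊤ : ℕ∞) (fderiv ℝ (fun q : ℝ × ℝ × ℝ => v q.1 q.2.1 q.2.2)) :=
    ContDiff.fderiv_right (m := (⊤ : ℕ∞)) h (by simp)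
  have h2 := h1.differentiable (by simp)
  funext t x y
  have key : ∀ a b : ℝ × ℝ × ℝ, D a (D b v) t x y =
      fderiv ℝ (fderiv ℝ (fun q : ℝ × ℝ × ℝ => v q.1 q.2.1 q.2.2)) (t, x, y) a b := by
    intro a b
    have := ((h2 (t, x, y)).hasFDerivAt.clm_apply (hasFDerivAt_const b (t, x, y))).fderiv
    change fderiv ℝ (fun q : ℝ × ℝ × ℝ =>
      fderiv ℝ (fun q : ℝ × ℝ × ℝ => v q.1 q.2.1 q.2.2) q b) (t, x, y) a = _
    rw [this]; simp
  rw [key, key]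
  have hs : IsSymmSndFDerivAt ℝ (fun q : ℝ × ℝ × ℝ => v q.1 q.2.1 q.2.2) (t, x, y) :=
    ContDiffAt.isSymmSndFDerivAt (n := (⊤ : ℕ∞)) (ContDiff.contDiffAt h) (by simp; exact WithTop.coe_le_coe.2 (le_top : (2 : ℕ∞) ≤ ⊤))
  exact hs e e'

lemma S.fd {v} (h : S v) (t x y) : HasFDerivAt (fun q : ℝ × ℝ × ℝ => v q.1 q.2.1 q.2.2)
    (fderiv ℝ (fun q : ℝ × ℝ × ℝ => v q.1 q.2.1 q.2.2) (t, x, y)) (t, x, y) :=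
  (ContDiff.differentiable h (by simp) _).hasFDerivAt

lemma S.dt' {v} (h : S v) (t x y) : HasDerivAt (fun s => v s x y) (KKPaux.D (1, 0, 0) v t x y) t :=
  (h.fd t x y).comp_hasDerivAt (f := fun s : ℝ => (s, x, y)) t
    ((hasDerivAt_id t).prodMk ((hasDerivAt_const t x).prodMk (hasDerivAt_const t y)))

lemma S.dx' {v} (h : S v) (t x y) : HasDerivAt (fun s => v t s y) (KKPaux.D (0, 1, 0) v t x y) x :=
  (h.fd t x y).comp_hasDerivAt (f := fun s : ℝ => (t, s, y)) x
    ((hasDerivAt_const x t).prodMk ((hasDerivAt_id x).prodMk (hasDerivAt_const x y)))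

lemma S.dy' {v} (h : S v) (t x y) : HasDerivAt (fun s => v t x s) (KKPaux.D (0, 0, 1) v t x y) y :=
  (h.fd t x y).comp_hasDerivAt (f := fun s : ℝ => (t, x, s)) y
    ((hasDerivAt_const y t).prodMk ((hasDerivAt_const y x).prodMk (hasDerivAt_id y)))

lemma S.pt_eq {v} (h : S v) : pt v = KKPaux.D (1, 0, 0) v := by
  funext t x y; exact (h.dt' t x y).deriv
lemma S.px_eq {v} (h : S v) : px v = KKPaux.D (0, 1, 0) v := by
  funext t x y; exact (h.dx' t x y).deriv
lemma S.py_eq {v} (h : S v) : py v = KKPaux.D (0, 0, 1) v := by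
  funext t x y; exact (h.dy' t x y).deriv

lemma S.pt {v} (h : S v) : S (pt v) := h.pt_eq ▸ h.D _
lemma S.px {v} (h : S v) : S (px v) := h.px_eq ▸ h.D _
lemma S.py {v} (h : S v) : S (py v) := h.py_eq ▸ h.D _

lemma S.dt {v} (h : S v) (t x y) : HasDerivAt (fun s => v s x y) (_root_.pt v t x y) t :=
  h.pt_eq ▸ h.dt' t x y
lemma S.dx {v} (h : S v) (t x y) : HasDerivAt (fun s => v t s y) (_root_.px v t x y) x :=
  h.px_eq ▸ h.dx' t x y
lemma S.dy {v} (h : S v) (t x y) : HasDerivAt (fun s => v t x s) (_root_.py v t x y) y :=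
  h.py_eq ▸ h.dy' t x y

lemma S.tx {v} (h : S v) : _root_.pt (_root_.px v) = _root_.px (_root_.pt v) := by
  rw [h.px.pt_eq, h.pt.px_eq, h.px_eq, h.pt_eq, D_comm h]
lemma S.yx {v} (h : S v) : _root_.py (_root_.px v) = _root_.px (_root_.py v) := by
  rw [h.px.py_eq, h.py.px_eq, h.px_eq, h.py_eq, D_comm h]

lemma px_gen {w} (h : S w) (a b : ℝ → ℝ) (c : ℝ → ℝ → ℝ) :
    px (fun t x y => a t * w t x y + x * b t + c t y) =
      fun t x y => a t * px w t x y + b t := by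
  funext t x y
  have := ((((h.dx t x y).const_mul (a t)).add
    ((hasDerivAt_id x).mul_const (b t))).add_const (c t y)).deriv
  simpa [px] using this

lemma px_gen1 {w} (h : S w) (a b : ℝ → ℝ) :
    px (fun t x y => a t * w t x y + b t) = fun t x y => a t * px w t x y := by
  funext t x y
  exact (((h.dx t x y).const_mul (a t)).add_const (b t)).deriv

lemma px_gen2 {w} (h : S w) (a : ℝ → ℝ) :
    px (fun t x y => a t * w t x y) = fun t x y => a t * px w t x y := by
  funext t x y
  exact ((h.dx t x y).const_mul (a t)).deriv

end KKPaux

/-- The generalized x-translation with arbitrary time-dependent coefficient is a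
symmetry of the potential Kawahara–KP equation in linearized (characteristic) form. -/
theorem gen_x_translation_symmetry_KKP (β σ : ℝ) (hβ : β ≠ 0) (hσ : σ = 1 ∨ σ = -1)
    (v : ℝ → ℝ → ℝ → ℝ)
    (hv : ContDiff ℝ (⊤ : ℕ∞) (fun q : ℝ × ℝ × ℝ => v q.1 q.2.1 q.2.2))
    (hsol : ∀ t x y : ℝ, KKP β σ v t x y = 0)
    (f : ℝ → ℝ) (hf : ContDiff ℝ (⊤ : ℕ∞) f) :
    ∀ t x y : ℝ,
      KKPlin β σ v
        (fun t x y => - f t * px v t x y + x * deriv f t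
          + (1 / (2 * σ)) * y ^ 2 * deriv (deriv f) t) t x y = 0 := by
  intro t x y
  have h : KKPaux.S v := hv
  have hσ0 : σ ≠ 0 := by rcases hσ with h | h <;> rw [h] <;> norm_num
  have hf1 : ContDiff ℝ (⊤ : ℕ∞) (deriv f) := (contDiff_infty_iff_deriv.1 hf).2
  have hf2 : ContDiff ℝ (⊤ : ℕ∞) (deriv (deriv f)) := (contDiff_infty_iff_deriv.1 hf1).2
  have d0 : ∀ t, HasDerivAt f (deriv f t) t := fun t =>
    (hf.differentiable (by simp) t).hasDerivAt
  have d1 : ∀ t, HasDerivAt (deriv f) (deriv (deriv f) t) t := fun t =>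
    (hf1.differentiable (by simp) t).hasDerivAt
  have d2 : ∀ t, HasDerivAt (deriv (deriv f)) (deriv (deriv (deriv f)) t) t := fun t =>
    (hf2.differentiable (by simp) t).hasDerivAt
  have h1 := h.px
  have h2 := h1.px
  have h3 := h2.px
  have h4 := h3.px
  have h5 := h4.px
  have h6 := h5.px
  -- differentiate the equation in x
  have hE : px (pt (px v)) t x y + (px (px v) t x y * px (px v) t x y
      + px v t x y * px (px (px v)) t x y) + β * px (px (px (px (px v)))) t x y
      + px (px (px (px (px (px (px v)))))) t x y - σ * py (py (px v)) t x y = 0 := by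
    have A := (((((h.pt.px.dx t x y).add ((h1.dx t x y).mul (h2.dx t x y))).add
      ((h4.dx t x y).const_mul β)).add (h6.dx t x y)).sub ((h.py.py.dx t x y).const_mul σ))
    have B : HasDerivAt (fun s => KKP β σ v t s y) 0 x := by
      simp only [hsol]; exact hasDerivAt_const x 0
    rw [h.tx, h.yx, h.py.yx]
    exact A.unique B
  set p : ℝ → ℝ → ℝ → ℝ := (fun t x y => - f t * px v t x y + x * deriv f t
          + (1 / (2 * σ)) * y ^ 2 * deriv (deriv f) t) with hp
  have p1 : px p = fun t x y => (- f t) * px (px v) t x y + deriv f t :=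
    KKPaux.px_gen h1 (fun t => - f t) (deriv f)
      (fun t y => (1 / (2 * σ)) * y ^ 2 * deriv (deriv f) t)
  have p2 : px (px p) = fun t x y => (- f t) * px (px (px v)) t x y := by
    rw [p1]; exact KKPaux.px_gen1 h2 (fun t => - f t) (deriv f)
  have p3 : px (px (px p)) = fun t x y => (- f t) * px (px (px (px v))) t x y := by
    rw [p2]; exact KKPaux.px_gen2 h3 (fun t => - f t)
  have p4 : px (px (px (px p))) = fun t x y => (- f t) * px (px (px (px (px v)))) t x y := by
    rw [p3]; exact KKPaux.px_gen2 h4 (fun t => - f t)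
  have p5 : px (px (px (px (px p)))) =
      fun t x y => (- f t) * px (px (px (px (px (px v))))) t x y := by
    rw [p4]; exact KKPaux.px_gen2 h5 (fun t => - f t)
  have p6 : px (px (px (px (px (px p))))) =
      fun t x y => (- f t) * px (px (px (px (px (px (px v)))))) t x y := by
    rw [p5]; exact KKPaux.px_gen2 h6 (fun t => - f t)
  have q1 : pt p = fun t x y => (- deriv f t * px v t x y + - f t * pt (px v) t x y)
      + x * deriv (deriv f) t + (1 / (2 * σ)) * y ^ 2 * deriv (deriv (deriv f)) t := by
    funext t x y
    exact ((((d0 t).neg.mul (h1.dt t x y)).add ((d1 t).const_mul x)).add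
      ((d2 t).const_mul ((1 / (2 * σ)) * y ^ 2))).deriv
  have q2 : px (pt p) t x y = (- deriv f t * px (px v) t x y + - f t * px (pt (px v)) t x y)
      + deriv (deriv f) t := by
    rw [q1]
    have := (((((h1.dx t x y).const_mul (- deriv f t)).add
      ((h1.pt.dx t x y).const_mul (- f t))).add
      ((hasDerivAt_id x).mul_const (deriv (deriv f) t))).add_const
      ((1 / (2 * σ)) * y ^ 2 * deriv (deriv (deriv f)) t)).deriv
    rw [one_mul] at this
    exact this
  have r1 : py p = fun t x y => - f t * py (px v) t x y
      + (1 / (2 * σ)) * (2 * y) * deriv (deriv f) t := by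
    funext t x y
    have := ((((h1.dy t x y).const_mul (- f t)).add_const (x * deriv f t)).add
      ((((hasDerivAt_pow 2 y).const_mul (1 / (2 * σ)))).mul_const (deriv (deriv f) t))).deriv
    refine Eq.trans this ?_
    norm_num
  have r2 : py (py p) t x y = - f t * py (py (px v)) t x y
      + (1 / (2 * σ)) * (2 * 1) * deriv (deriv f) t := by
    rw [r1]
    exact (((h1.py.dy t x y).const_mul (- f t)).add
      (((((hasDerivAt_id y).const_mul 2)).const_mul (1 / (2 * σ))).mul_const
        (deriv (deriv f) t))).deriv
  unfold KKPlin
  rw [q2, r2, p6, p4, p2, p1]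
  have hc : σ * ((1 / (2 * σ)) * (2 * 1)) = 1 := by field_simp
  linear_combination (- f t) * hE - deriv (deriv f) t * hc
end

section
/- The generalized y-translation with arbitrary time-dependent coefficient is a symmetry of the potential Kawahara–KP equation in linearized (characteristic) form: if v solves the potential Kawahara–KP equation, f : ℝ → ℝ is any smooth function, and p(t,x,y) := -(1/(2σ))·y·f'(t)·v_x(t,x,y) - f(t)·v_y(t,x,y) + (1/(2σ))·y·( x·f''(t) + (1/(6σ))·y²·f'''(t) ), then p satisfies the linearized equation p_tx + v_xx·p_x + v_x·p_xx + β·p_xxxx + p_xxxxxx - σ·p_yy = 0 at every point of ℝ³. -/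
/-- uncurrying -/
def UU (v : ℝ → ℝ → ℝ → ℝ) : ℝ × ℝ × ℝ → ℝ := fun q => v q.1 q.2.1 q.2.2

/-- smoothness -/
def SS (v : ℝ → ℝ → ℝ → ℝ) : Prop := ContDiff ℝ (⊤ : ℕ∞) (UU v)

lemma SS.diff {v : ℝ → ℝ → ℝ → ℝ} (h : SS v) : Differentiable ℝ (UU v) :=
  ContDiff.differentiable h (by simp)

lemma SS.ht {v : ℝ → ℝ → ℝ → ℝ} (h : SS v) (t x y : ℝ) :
    HasDerivAt (fun s => v s x y) (fderiv ℝ (UU v) (t, x, y) (1, 0, 0)) t := by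
  have h1 : HasDerivAt (fun s : ℝ => ((s, x, y) : ℝ × ℝ × ℝ)) (1, 0, 0) t :=
    (hasDerivAt_id t).prodMk ((hasDerivAt_const t x).prodMk (hasDerivAt_const t y))
  exact (h.diff (t, x, y)).hasFDerivAt.comp_hasDerivAt t h1

lemma SS.hx {v : ℝ → ℝ → ℝ → ℝ} (h : SS v) (t x y : ℝ) :
    HasDerivAt (fun s => v t s y) (fderiv ℝ (UU v) (t, x, y) (0, 1, 0)) x := by
  have h1 : HasDerivAt (fun s : ℝ => ((t, s, y) : ℝ × ℝ × ℝ)) (0, 1, 0) x :=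
    (hasDerivAt_const x t).prodMk ((hasDerivAt_id x).prodMk (hasDerivAt_const x y))
  exact (h.diff (t, x, y)).hasFDerivAt.comp_hasDerivAt x h1

lemma SS.hy {v : ℝ → ℝ → ℝ → ℝ} (h : SS v) (t x y : ℝ) :
    HasDerivAt (fun s => v t x s) (fderiv ℝ (UU v) (t, x, y) (0, 0, 1)) y := by
  have h1 : HasDerivAt (fun s : ℝ => ((t, x, s) : ℝ × ℝ × ℝ)) (0, 0, 1) y :=
    (hasDerivAt_const y t).prodMk ((hasDerivAt_const y x).prodMk (hasDerivAt_id y))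
  exact (h.diff (t, x, y)).hasFDerivAt.comp_hasDerivAt y h1

lemma SS.Ut {v : ℝ → ℝ → ℝ → ℝ} (h : SS v) :
    UU (pt v) = fun q => fderiv ℝ (UU v) q (1, 0, 0) := by
  funext q; exact (h.ht q.1 q.2.1 q.2.2).deriv

lemma SS.Ux {v : ℝ → ℝ → ℝ → ℝ} (h : SS v) :
    UU (px v) = fun q => fderiv ℝ (UU v) q (0, 1, 0) := by
  funext q; exact (h.hx q.1 q.2.1 q.2.2).deriv

lemma SS.Uy {v : ℝ → ℝ → ℝ → ℝ} (h : SS v) :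
    UU (py v) = fun q => fderiv ℝ (UU v) q (0, 0, 1) := by
  funext q; exact (h.hy q.1 q.2.1 q.2.2).deriv

lemma SS.fd {v : ℝ → ℝ → ℝ → ℝ} (h : SS v) : ContDiff ℝ (⊤ : ℕ∞) (fderiv ℝ (UU v)) :=
  ContDiff.fderiv_right (m := (⊤ : ℕ∞)) h (by simp)

lemma SS.t {v : ℝ → ℝ → ℝ → ℝ} (h : SS v) : SS (pt v) := by
  unfold SS; rw [h.Ut]; exact h.fd.clm_apply contDiff_const
lemma SS.x {v : ℝ → ℝ → ℝ → ℝ} (h : SS v) : SS (px v) := by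
  unfold SS; rw [h.Ux]; exact h.fd.clm_apply contDiff_const
lemma SS.y {v : ℝ → ℝ → ℝ → ℝ} (h : SS v) : SS (py v) := by
  unfold SS; rw [h.Uy]; exact h.fd.clm_apply contDiff_const

lemma SS.dt {v : ℝ → ℝ → ℝ → ℝ} (h : SS v) (t x y : ℝ) :
    HasDerivAt (fun s => v s x y) (pt v t x y) t :=
  (h.ht t x y).differentiableAt.hasDerivAt
lemma SS.dx {v : ℝ → ℝ → ℝ → ℝ} (h : SS v) (t x y : ℝ) :
    HasDerivAt (fun s => v t s y) (px v t x y) x :=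
  (h.hx t x y).differentiableAt.hasDerivAt
lemma SS.dy {v : ℝ → ℝ → ℝ → ℝ} (h : SS v) (t x y : ℝ) :
    HasDerivAt (fun s => v t x s) (py v t x y) y :=
  (h.hy t x y).differentiableAt.hasDerivAt

lemma SS.comm {v : ℝ → ℝ → ℝ → ℝ} (h : SS v) (q a b : ℝ × ℝ × ℝ) :
    fderiv ℝ (fun q => fderiv ℝ (UU v) q a) q b = fderiv ℝ (fun q => fderiv ℝ (UU v) q b) q a := by
  have hd : DifferentiableAt ℝ (fderiv ℝ (UU v)) q := (h.fd.differentiable (by simp)) q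
  have hs : IsSymmSndFDerivAt ℝ (UU v) q :=
    (ContDiff.contDiffAt h).isSymmSndFDerivAt (by
      rw [minSmoothness_of_isRCLikeNormedField]; exact WithTop.coe_le_coe.2 (le_top : (2 : ℕ∞) ≤ ⊤))
  rw [fderiv_clm_apply hd (differentiableAt_const a), fderiv_clm_apply hd (differentiableAt_const b)]
  simpa using hs b a

lemma SS.tx {v : ℝ → ℝ → ℝ → ℝ} (h : SS v) : pt (px v) = px (pt v) := by
  funext t x y
  rw [show pt (px v) t x y = _ from (h.x.ht t x y).deriv,
    show px (pt v) t x y = _ from (h.t.hx t x y).deriv, h.Ut, h.Ux]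
  exact h.comm _ _ _
lemma SS.ty {v : ℝ → ℝ → ℝ → ℝ} (h : SS v) : pt (py v) = py (pt v) := by
  funext t x y
  rw [show pt (py v) t x y = _ from (h.y.ht t x y).deriv,
    show py (pt v) t x y = _ from (h.t.hy t x y).deriv, h.Ut, h.Uy]
  exact h.comm _ _ _
lemma SS.yx {v : ℝ → ℝ → ℝ → ℝ} (h : SS v) : py (px v) = px (py v) := by
  funext t x y
  rw [show py (px v) t x y = _ from (h.x.hy t x y).deriv,
    show px (py v) t x y = _ from (h.y.hx t x y).deriv, h.Uy, h.Ux]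
  exact h.comm _ _ _

lemma px_form {u w : ℝ → ℝ → ℝ → ℝ} (hu : SS u) (hw : SS w) (a b c d : ℝ → ℝ → ℝ) :
    px (fun t x y => a t y * u t x y + b t y * w t x y + c t y * x + d t y) =
    fun t x y => a t y * px u t x y + b t y * px w t x y + (fun _ _ => 0) t y * x + c t y := by
  funext t x y
  refine HasDerivAt.deriv ?_
  convert ((((hu.dx t x y).const_mul (a t y)).add ((hw.dx t x y).const_mul (b t y))).add
    ((hasDerivAt_id x).const_mul (c t y))).add_const (d t y) using 1 <;> simp

lemma pt_form {u w : ℝ → ℝ → ℝ → ℝ} (hu : SS u) (hw : SS w) (a b c d a' b' c' d' : ℝ → ℝ → ℝ)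
    (ha : ∀ t y, HasDerivAt (fun s => a s y) (a' t y) t)
    (hb : ∀ t y, HasDerivAt (fun s => b s y) (b' t y) t)
    (hc : ∀ t y, HasDerivAt (fun s => c s y) (c' t y) t)
    (hd : ∀ t y, HasDerivAt (fun s => d s y) (d' t y) t) (t x y : ℝ) :
    HasDerivAt (fun t => a t y * u t x y + b t y * w t x y + c t y * x + d t y)
    (a' t y * u t x y + a t y * pt u t x y + (b' t y * w t x y + b t y * pt w t x y)
      + c' t y * x + d' t y) t :=
  ((((ha t y).mul (hu.dt t x y)).add ((hb t y).mul (hw.dt t x y))).add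
    ((hc t y).mul_const x)).add (hd t y)

/-- The generalized y-translation with arbitrary time-dependent coefficient is a
symmetry of the potential Kawahara–KP equation in linearized (characteristic) form. -/
theorem gen_y_translation_symmetry_KKP (β σ : ℝ) (hβ : β ≠ 0) (hσ : σ = 1 ∨ σ = -1)
    (v : ℝ → ℝ → ℝ → ℝ)
    (hv : ContDiff ℝ (⊤ : ℕ∞) (fun q : ℝ × ℝ × ℝ => v q.1 q.2.1 q.2.2))
    (hsol : ∀ t x y : ℝ, KKP β σ v t x y = 0)
    (f : ℝ → ℝ) (hf : ContDiff ℝ (⊤ : ℕ∞) f) :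
    ∀ t x y : ℝ,
      KKPlin β σ v
        (fun t x y => - (1 / (2 * σ)) * y * deriv f t * px v t x y
          - f t * py v t x y
          + (1 / (2 * σ)) * y * (x * deriv (deriv f) t
              + (1 / (6 * σ)) * y ^ 2 * deriv (deriv (deriv f)) t)) t x y = 0 := by
  intro t x y
  have hS : SS v := hv
  have hσ0 : σ ≠ 0 := by rcases hσ with h | h <;> rw [h] <;> norm_num
  have hf0 : ContDiff ℝ (⊤ : ℕ∞) (deriv f) := (contDiff_infty_iff_deriv.1 hf).2
  have hf1 : ContDiff ℝ (⊤ : ℕ∞) (deriv (deriv f)) := (contDiff_infty_iff_deriv.1 hf0).2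
  have hf2 : ContDiff ℝ (⊤ : ℕ∞) (deriv (deriv (deriv f))) := (contDiff_infty_iff_deriv.1 hf1).2
  have d0 : ∀ t, HasDerivAt f (deriv f t) t := fun t =>
    ((contDiff_infty_iff_deriv.1 hf).1 t).hasDerivAt
  have d1 : ∀ t, HasDerivAt (deriv f) (deriv (deriv f) t) t := fun t =>
    ((contDiff_infty_iff_deriv.1 hf0).1 t).hasDerivAt
  have d2 : ∀ t, HasDerivAt (deriv (deriv f)) (deriv (deriv (deriv f)) t) t := fun t =>
    ((contDiff_infty_iff_deriv.1 hf1).1 t).hasDerivAt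
  have d3 : ∀ t, HasDerivAt (deriv (deriv (deriv f))) (deriv (deriv (deriv (deriv f))) t) t :=
    fun t => ((contDiff_infty_iff_deriv.1 hf2).1 t).hasDerivAt
  obtain ⟨k, hk⟩ : ∃ k, k = 1 / (2 * σ) := ⟨_, rfl⟩
  obtain ⟨m, hm⟩ : ∃ m, m = 1 / (6 * σ) := ⟨_, rfl⟩
  have hk' : σ * k * 2 = 1 := by rw [hk]; field_simp
  have hm' : σ * m * 6 = 1 := by rw [hm]; field_simp
  rw [← hk, ← hm]
  obtain ⟨p, hp⟩ : ∃ p : ℝ → ℝ → ℝ → ℝ, p = fun t x y =>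
    (fun t y => -k * y * deriv f t) t y * px v t x y + (fun t _ => - f t) t y * py v t x y
      + (fun t y => k * y * deriv (deriv f) t) t y * x
      + (fun t y => k * m * y ^ 3 * deriv (deriv (deriv f)) t) t y := ⟨_, rfl⟩
  have hpe : (fun t x y => - k * y * deriv f t * px v t x y
          - f t * py v t x y
          + k * y * (x * deriv (deriv f) t
              + m * y ^ 2 * deriv (deriv (deriv f)) t)) = p := by
    rw [hp]; funext t x y; ring
  rw [hpe]
  have e1 := px_form hS.x hS.y (fun t y => -k * y * deriv f t) (fun t _ => - f t)
    (fun t y => k * y * deriv (deriv f) t) (fun t y => k * m * y ^ 3 * deriv (deriv (deriv f)) t)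
  rw [← hp] at e1
  have e2 := px_form hS.x.x hS.y.x (fun t y => -k * y * deriv f t) (fun t _ => - f t)
    (fun _ _ => 0) (fun t y => k * y * deriv (deriv f) t)
  rw [← e1] at e2
  have e3 := px_form hS.x.x.x hS.y.x.x (fun t y => -k * y * deriv f t) (fun t _ => - f t)
    (fun _ _ => 0) (fun _ _ => 0)
  rw [← e2] at e3
  have e4 := px_form hS.x.x.x.x hS.y.x.x.x (fun t y => -k * y * deriv f t) (fun t _ => - f t)
    (fun _ _ => 0) (fun _ _ => 0)
  rw [← e3] at e4
  have e5 := px_form hS.x.x.x.x.x hS.y.x.x.x.x (fun t y => -k * y * deriv f t) (fun t _ => - f t)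
    (fun _ _ => 0) (fun _ _ => 0)
  rw [← e4] at e5
  have e6 := px_form hS.x.x.x.x.x.x hS.y.x.x.x.x.x (fun t y => -k * y * deriv f t)
    (fun t _ => - f t) (fun _ _ => 0) (fun _ _ => 0)
  rw [← e5] at e6
  -- time derivative
  have et : pt p = fun t x y => -k * y * deriv (deriv f) t * px v t x y
      + -k * y * deriv f t * pt (px v) t x y
      + (- deriv f t * py v t x y + - f t * pt (py v) t x y)
      + k * y * deriv (deriv (deriv f)) t * x
      + k * m * y ^ 3 * deriv (deriv (deriv (deriv f))) t := by
    rw [hp]; funext t x y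
    refine HasDerivAt.deriv ?_
    exact pt_form hS.x hS.y (fun t y => -k * y * deriv f t) (fun t _ => - f t)
      (fun t y => k * y * deriv (deriv f) t) (fun t y => k * m * y ^ 3 * deriv (deriv (deriv f)) t)
      (fun t y => -k * y * deriv (deriv f) t) (fun t _ => - deriv f t)
      (fun t y => k * y * deriv (deriv (deriv f)) t)
      (fun t y => k * m * y ^ 3 * deriv (deriv (deriv (deriv f))) t)
      (fun t y => (d1 t).const_mul _) (fun t y => (d0 t).neg)
      (fun t y => (d2 t).const_mul _) (fun t y => (d3 t).const_mul _) t x y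
  have etx : px (pt p) t x y = -k * y * deriv (deriv f) t * px (px v) t x y
      + -k * y * deriv f t * px (pt (px v)) t x y
      + (- deriv f t * px (py v) t x y + - f t * px (pt (py v)) t x y)
      + k * y * deriv (deriv (deriv f)) t := by
    rw [et]
    refine HasDerivAt.deriv ?_
    convert (((((hS.x.dx t x y).const_mul (-k * y * deriv (deriv f) t)).add
      ((hS.x.t.dx t x y).const_mul (-k * y * deriv f t))).add
      (((hS.y.dx t x y).const_mul (- deriv f t)).add ((hS.y.t.dx t x y).const_mul (- f t)))).add
      ((hasDerivAt_id x).const_mul (k * y * deriv (deriv (deriv f)) t))).add_const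
      (k * m * y ^ 3 * deriv (deriv (deriv (deriv f))) t) using 1 <;> simp
  -- y derivatives
  have ey : py p = fun t x y => -k * deriv f t * px v t x y
      + -k * deriv f t * (y * py (px v) t x y)
      + - f t * py (py v) t x y
      + k * deriv (deriv f) t * x
      + k * m * deriv (deriv (deriv f)) t * (3 * y ^ 2) := by
    rw [hp]; funext t x y
    refine HasDerivAt.deriv ?_
    have h := (((((hasDerivAt_id y).mul (hS.x.dy t x y)).const_mul (-k * deriv f t)).add
      ((hS.y.dy t x y).const_mul (- f t))).add
      ((hasDerivAt_id y).const_mul (k * deriv (deriv f) t * x))).add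
      ((hasDerivAt_pow 3 y).const_mul (k * m * deriv (deriv (deriv f)) t))
    refine (h.congr_of_eventuallyEq (Filter.Eventually.of_forall fun s => ?_)).congr_deriv ?_
    · simp; ring
    · simp; ring
  have eyy : py (py p) t x y = -k * deriv f t * (2 * py (px v) t x y)
      + -k * deriv f t * (y * py (py (px v)) t x y)
      + - f t * py (py (py v)) t x y
      + k * m * deriv (deriv (deriv f)) t * (6 * y) := by
    rw [ey]
    refine HasDerivAt.deriv ?_
    have h := (((((hS.x.dy t x y).const_mul (-k * deriv f t)).add
      (((hasDerivAt_id y).mul (hS.x.y.dy t x y)).const_mul (-k * deriv f t))).add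
      ((hS.y.y.dy t x y).const_mul (- f t))).add_const (k * deriv (deriv f) t * x)).add
      (((hasDerivAt_pow 2 y).const_mul 3).const_mul (k * m * deriv (deriv (deriv f)) t))
    refine (h.congr_of_eventuallyEq (Filter.Eventually.of_forall fun s => ?_)).congr_deriv ?_
    · simp
    · simp; ring
  -- differentiated equation
  have hx := (((((hS.t.x.dx t x y).add ((hS.x.dx t x y).mul (hS.x.x.dx t x y))).add
    ((hS.x.x.x.x.dx t x y).const_mul β)).add (hS.x.x.x.x.x.x.dx t x y)).sub
    ((hS.y.y.dx t x y).const_mul σ))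
  have hx0 := hx.unique ((hasDerivAt_const x (0:ℝ)).congr_of_eventuallyEq
    (Filter.Eventually.of_forall fun s => hsol t s y))
  have hy := (((((hS.t.x.dy t x y).add ((hS.x.dy t x y).mul (hS.x.x.dy t x y))).add
    ((hS.x.x.x.x.dy t x y).const_mul β)).add (hS.x.x.x.x.x.x.dy t x y)).sub
    ((hS.y.y.dy t x y).const_mul σ))
  have hy0 := hy.unique ((hasDerivAt_const y (0:ℝ)).congr_of_eventuallyEq
    (Filter.Eventually.of_forall fun s => hsol t x s))
  unfold KKPlin
  rw [etx, eyy, e6, e4, e2, e1]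
  rw [hS.x.x.x.x.x.yx, hS.x.x.x.x.yx, hS.x.x.x.yx, hS.x.x.yx, hS.x.yx, hS.yx, hS.t.yx] at hy0
  rw [hS.tx, hS.ty, hS.yx, hS.y.yx]
  dsimp only
  linear_combination (-k * y * deriv f t) * hx0 + (- f t) * hy0
    + (deriv f t * px (py v) t x y) * hk' - (k * y * deriv (deriv (deriv f)) t) * hm'
end

section
/- The finite transformation group generated by the generalized x-translation symmetry maps solutions to solutions: if v solves the potential Kawahara–KP equation, f : ℝ → ℝ is any smooth function, and ε is any real number, then the function ṽ(t,x,y) := v(t, x - ε·f(t), y) + ε·x·f'(t) + (ε/(2σ))·y²·f''(t) - (1/2)·ε²·f(t)·f'(t) also solves the potential Kawahara–KP equation. (For f(t) = t this is the Galilean boost in the x direction.) -/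
lemma aux_line (V : ℝ × ℝ × ℝ → ℝ) (hV : ContDiff ℝ (⊤ : ℕ∞) V) (a b c a' b' c' s : ℝ)
    (g₁ g₂ g₃ : ℝ → ℝ) (h₁ : HasDerivAt g₁ a' s) (h₂ : HasDerivAt g₂ b' s)
    (h₃ : HasDerivAt g₃ c' s) (e₁ : g₁ s = a) (e₂ : g₂ s = b) (e₃ : g₃ s = c) :
    HasDerivAt (fun s => V (g₁ s, g₂ s, g₃ s)) (fderiv ℝ V (a, b, c) (a', b', c')) s := by
  subst e₁ e₂ e₃
  have hd : HasFDerivAt V (fderiv ℝ V (g₁ s, g₂ s, g₃ s)) (g₁ s, g₂ s, g₃ s) :=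
    ((hV.differentiable (by simp)) _).hasFDerivAt
  exact hd.comp_hasDerivAt s (h₁.prodMk (h₂.prodMk h₃))

lemma px_eq (v : ℝ → ℝ → ℝ → ℝ)
    (hv : ContDiff ℝ (⊤ : ℕ∞) (fun q : ℝ × ℝ × ℝ => v q.1 q.2.1 q.2.2)) (t x y : ℝ) :
    px v t x y = fderiv ℝ (fun q : ℝ × ℝ × ℝ => v q.1 q.2.1 q.2.2) (t, x, y) (0, 1, 0) :=
  (aux_line _ hv t x y 0 1 0 x (fun _ => t) (fun s => s) (fun _ => y) (hasDerivAt_const _ _)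
    (hasDerivAt_id _) (hasDerivAt_const _ _) rfl rfl rfl).deriv

lemma pt_eq (v : ℝ → ℝ → ℝ → ℝ)
    (hv : ContDiff ℝ (⊤ : ℕ∞) (fun q : ℝ × ℝ × ℝ => v q.1 q.2.1 q.2.2)) (t x y : ℝ) :
    pt v t x y = fderiv ℝ (fun q : ℝ × ℝ × ℝ => v q.1 q.2.1 q.2.2) (t, x, y) (1, 0, 0) :=
  (aux_line _ hv t x y 1 0 0 t (fun s => s) (fun _ => x) (fun _ => y) (hasDerivAt_id _)
    (hasDerivAt_const _ _) (hasDerivAt_const _ _) rfl rfl rfl).deriv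

lemma py_eq (v : ℝ → ℝ → ℝ → ℝ)
    (hv : ContDiff ℝ (⊤ : ℕ∞) (fun q : ℝ × ℝ × ℝ => v q.1 q.2.1 q.2.2)) (t x y : ℝ) :
    py v t x y = fderiv ℝ (fun q : ℝ × ℝ × ℝ => v q.1 q.2.1 q.2.2) (t, x, y) (0, 0, 1) :=
  (aux_line _ hv t x y 0 0 1 y (fun _ => t) (fun _ => x) (fun s => s) (hasDerivAt_const _ _)
    (hasDerivAt_const _ _) (hasDerivAt_id _) rfl rfl rfl).deriv

lemma smooth_dir (V : ℝ × ℝ × ℝ → ℝ) (hV : ContDiff ℝ (⊤ : ℕ∞) V) (w : ℝ × ℝ × ℝ) :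
    ContDiff ℝ (⊤ : ℕ∞) (fun q => fderiv ℝ V q w) :=
  (hV.fderiv_right (m := (⊤ : ℕ∞)) (by simp)).clm_apply contDiff_const

lemma px_smooth (v : ℝ → ℝ → ℝ → ℝ)
    (hv : ContDiff ℝ (⊤ : ℕ∞) (fun q : ℝ × ℝ × ℝ => v q.1 q.2.1 q.2.2)) :
    ContDiff ℝ (⊤ : ℕ∞) (fun q : ℝ × ℝ × ℝ => px v q.1 q.2.1 q.2.2) := by
  simp only [px_eq v hv]
  exact smooth_dir _ hv _

lemma pt_smooth (v : ℝ → ℝ → ℝ → ℝ)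
    (hv : ContDiff ℝ (⊤ : ℕ∞) (fun q : ℝ × ℝ × ℝ => v q.1 q.2.1 q.2.2)) :
    ContDiff ℝ (⊤ : ℕ∞) (fun q : ℝ × ℝ × ℝ => pt v q.1 q.2.1 q.2.2) := by
  simp only [pt_eq v hv]
  exact smooth_dir _ hv _

lemma py_smooth (v : ℝ → ℝ → ℝ → ℝ)
    (hv : ContDiff ℝ (⊤ : ℕ∞) (fun q : ℝ × ℝ × ℝ => v q.1 q.2.1 q.2.2)) :
    ContDiff ℝ (⊤ : ℕ∞) (fun q : ℝ × ℝ × ℝ => py v q.1 q.2.1 q.2.2) := by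
  simp only [py_eq v hv]
  exact smooth_dir _ hv _

lemma hasDeriv_x (v : ℝ → ℝ → ℝ → ℝ)
    (hv : ContDiff ℝ (⊤ : ℕ∞) (fun q : ℝ × ℝ × ℝ => v q.1 q.2.1 q.2.2)) (t x y c : ℝ) :
    HasDerivAt (fun s => v t (s - c) y) (px v t (x - c) y) x := by
  rw [px_eq v hv]
  exact aux_line _ hv t (x - c) y 0 1 0 x (fun _ => t) (fun s => s - c) (fun _ => y)
    (hasDerivAt_const _ _) ((hasDerivAt_id x).sub_const c) (hasDerivAt_const _ _) rfl rfl rfl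

lemma hasDeriv_y (v : ℝ → ℝ → ℝ → ℝ)
    (hv : ContDiff ℝ (⊤ : ℕ∞) (fun q : ℝ × ℝ × ℝ => v q.1 q.2.1 q.2.2)) (t x y : ℝ) :
    HasDerivAt (fun s => v t x s) (py v t x y) y := by
  rw [py_eq v hv]
  exact aux_line _ hv t x y 0 0 1 y (fun _ => t) (fun _ => x) (fun s => s)
    (hasDerivAt_const _ _) (hasDerivAt_const _ _) (hasDerivAt_id _) rfl rfl rfl

lemma hasDeriv_t (v : ℝ → ℝ → ℝ → ℝ)
    (hv : ContDiff ℝ (⊤ : ℕ∞) (fun q : ℝ × ℝ × ℝ => v q.1 q.2.1 q.2.2)) (t x y : ℝ)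
    (g : ℝ → ℝ) (g' : ℝ) (hg : HasDerivAt g g' t) :
    HasDerivAt (fun s => v s (x - g s) y) (pt v t (x - g t) y - g' * px v t (x - g t) y) t := by
  rw [px_eq v hv, pt_eq v hv]
  have h := aux_line _ hv t (x - g t) y 1 (-g') 0 t (fun s => s) (fun s => x - g s) (fun _ => y)
    (hasDerivAt_id _) (hg.const_sub x) (hasDerivAt_const _ _) rfl rfl rfl
  have hw : ((1 : ℝ), -g', (0 : ℝ)) = (1, 0, 0) - g' • ((0 : ℝ), (1 : ℝ), (0 : ℝ)) := by
    simp
  rw [hw, map_sub, map_smul, smul_eq_mul] at h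
  exact h

lemma px_shift (v : ℝ → ℝ → ℝ → ℝ)
    (hv : ContDiff ℝ (⊤ : ℕ∞) (fun q : ℝ × ℝ × ℝ => v q.1 q.2.1 q.2.2)) (g : ℝ → ℝ) :
    px (fun t x y => v t (x - g t) y) = fun t x y => px v t (x - g t) y := by
  funext t x y
  exact (hasDeriv_x v hv t x y (g t)).deriv

/-- The finite transformation group generated by the generalized x-translation
symmetry maps solutions to solutions. -/
theorem gen_x_translation_group_KKP (β σ : ℝ) (hβ : β ≠ 0) (hσ : σ = 1 ∨ σ = -1)
    (v : ℝ → ℝ → ℝ → ℝ)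
    (hv : ContDiff ℝ (⊤ : ℕ∞) (fun q : ℝ × ℝ × ℝ => v q.1 q.2.1 q.2.2))
    (hsol : ∀ t x y : ℝ, KKP β σ v t x y = 0)
    (f : ℝ → ℝ) (hf : ContDiff ℝ (⊤ : ℕ∞) f) (ε : ℝ) :
    ∀ t x y : ℝ,
      KKP β σ
        (fun t x y => v t (x - ε * f t) y + ε * x * deriv f t
          + (ε / (2 * σ)) * y ^ 2 * deriv (deriv f) t
          - (1 / 2) * ε ^ 2 * f t * deriv f t) t x y = 0 := by
  intro t x y
  have hσ0 : σ ≠ 0 := by rcases hσ with h | h <;> simp [h]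
  have hf1 : ContDiff ℝ (⊤ : ℕ∞) (deriv f) := (contDiff_infty_iff_deriv.1 hf).2
  have hf2 : ContDiff ℝ (⊤ : ℕ∞) (deriv (deriv f)) := (contDiff_infty_iff_deriv.1 hf1).2
  have d0 : ∀ t, HasDerivAt f (deriv f t) t := fun t =>
    (hf.differentiable (by simp) t).hasDerivAt
  have d1 : ∀ t, HasDerivAt (deriv f) (deriv (deriv f) t) t := fun t =>
    (hf1.differentiable (by simp) t).hasDerivAt
  have d2 : ∀ t, HasDerivAt (deriv (deriv f)) (deriv (deriv (deriv f)) t) t := fun t =>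
    (hf2.differentiable (by simp) t).hasDerivAt
  have s1 := px_smooth v hv
  have s2 := px_smooth _ s1
  have s3 := px_smooth _ s2
  have s4 := px_smooth _ s3
  have s5 := px_smooth _ s4
  have st := pt_smooth v hv
  have sy := py_smooth v hv
  set u : ℝ → ℝ → ℝ → ℝ := fun t x y => v t (x - ε * f t) y + ε * x * deriv f t
          + (ε / (2 * σ)) * y ^ 2 * deriv (deriv f) t
          - (1 / 2) * ε ^ 2 * f t * deriv f t with hu
  have ux : px u = fun t x y => px v t (x - ε * f t) y + ε * deriv f t := by
    funext t x y
    have h := ((((hasDeriv_x v hv t x y (ε * f t)).add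
      (((hasDerivAt_id x).const_mul ε).mul_const (deriv f t))).add_const
        ((ε / (2 * σ)) * y ^ 2 * deriv (deriv f) t)).sub_const
          ((1 / 2) * ε ^ 2 * f t * deriv f t)).deriv
    rw [mul_one] at h
    exact h
  have uxx : px (px u) = fun t x y => px (px v) t (x - ε * f t) y := by
    rw [ux]
    funext t x y
    exact ((hasDeriv_x _ s1 t x y (ε * f t)).add_const (ε * deriv f t)).deriv
  have ut : pt u = fun t x y => pt v t (x - ε * f t) y
      - ε * deriv f t * px v t (x - ε * f t) y + ε * x * deriv (deriv f) t
      + (ε / (2 * σ)) * y ^ 2 * deriv (deriv (deriv f)) t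
      - ((1 / 2) * ε ^ 2 * deriv f t * deriv f t
        + (1 / 2) * ε ^ 2 * f t * deriv (deriv f) t) := by
    funext t x y
    exact ((((hasDeriv_t v hv t x y (fun s => ε * f s) _ ((d0 t).const_mul ε)).add
      ((d1 t).const_mul (ε * x))).add ((d2 t).const_mul ((ε / (2 * σ)) * y ^ 2))).sub
        (((d0 t).const_mul ((1 / 2) * ε ^ 2)).mul (d1 t))).deriv
  have utx : px (pt u) t x y = px (pt v) t (x - ε * f t) y
      - ε * deriv f t * px (px v) t (x - ε * f t) y + ε * deriv (deriv f) t := by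
    rw [ut]
    have h := (((((hasDeriv_x _ st t x y (ε * f t)).sub
      ((hasDeriv_x _ s1 t x y (ε * f t)).const_mul (ε * deriv f t))).add
      (((hasDerivAt_id x).const_mul ε).mul_const (deriv (deriv f) t))).add_const
        ((ε / (2 * σ)) * y ^ 2 * deriv (deriv (deriv f)) t)).sub_const
          ((1 / 2) * ε ^ 2 * deriv f t * deriv f t
        + (1 / 2) * ε ^ 2 * f t * deriv (deriv f) t)).deriv
    rw [mul_one] at h
    exact h
  have uy : py u = fun t x y => py v t (x - ε * f t) y
      + (ε / (2 * σ)) * (2 * y) * deriv (deriv f) t := by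
    funext t x y
    have h := ((((hasDeriv_y v hv t (x - ε * f t) y).add_const (ε * x * deriv f t)).add
      (((hasDerivAt_pow 2 y).const_mul (ε / (2 * σ))).mul_const (deriv (deriv f) t))).sub_const
          ((1 / 2) * ε ^ 2 * f t * deriv f t)).deriv
    norm_num at h
    refine Eq.trans ?_ (h.trans ?_)
    · simp [py, hu]
    · ring
  have uyy : py (py u) t x y = py (py v) t (x - ε * f t) y
      + (ε / (2 * σ)) * 2 * deriv (deriv f) t := by
    rw [uy]
    have h := ((hasDeriv_y _ sy t (x - ε * f t) y).add
      ((((hasDerivAt_id y).const_mul 2).const_mul (ε / (2 * σ))).mul_const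
        (deriv (deriv f) t))).deriv
    rw [mul_one] at h
    exact h
  have key := hsol t (x - ε * f t) y
  unfold KKP at key ⊢
  rw [utx, uyy, uxx, ux, px_shift _ s2 (fun t => ε * f t), px_shift _ s3 (fun t => ε * f t),
    px_shift _ s4 (fun t => ε * f t), px_shift _ s5 (fun t => ε * f t)]
  have e : σ * (ε / (2 * σ) * 2 * deriv (deriv f) t) = ε * deriv (deriv f) t := by
    field_simp
  simp only []
  linear_combination key - e
end

section
/- Existence of sech-type line solitons (Proposition on solitary line waves): let β < 0, σ ∈ {1, -1}, and μ, ν be real constants; set r := √(-β/13), κ := σ·μ² + ν, p := κ + 36·r⁴, and q := 105·r⁴. Then the function U(ξ) := p - q·sech((1/2)·r·ξ)⁴ satisfies the line-wave ODE U·U' - κ·U' + β·U''' + U⁽⁵⁾ = 0 on all of ℝ. -/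
/-- The line-wave ODE `U·U' - κ·U' + β·U''' + U⁽⁵⁾ = 0` on all of `ℝ`. -/
def LineWaveODE (β κ : ℝ) (U : ℝ → ℝ) : Prop :=
  ∀ ξ : ℝ,
    U ξ * deriv U ξ - κ * deriv U ξ + β * deriv^[3] U ξ + deriv^[5] U ξ = 0

theorem aux_s (a x : ℝ) (n : ℕ) :
    HasDerivAt (fun x : ℝ => (1 / Real.cosh (a * x)) ^ n)
      (-(n * a) * ((1 / Real.cosh (a * x)) ^ n * Real.sinh (a * x) / Real.cosh (a * x))) x := by
  have hc : Real.cosh (a * x) ≠ 0 := (Real.cosh_pos _).ne'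
  have h0 : HasDerivAt (fun x : ℝ => a * x) a x := by
    simpa using (hasDerivAt_id x).const_mul a
  have h := (h0.cosh.inv hc).pow n
  have h2 : (fun x : ℝ => (1 / Real.cosh (a * x)) ^ n) =
      (fun x => Real.cosh (a * x))⁻¹ ^ n := by
    funext y
    simp
  rw [h2]
  refine HasDerivAt.congr_deriv h ?_
  rcases n with _ | n
  · simp
  · simp
    field_simp
    ring

theorem aux_t (a x : ℝ) (n : ℕ) :
    HasDerivAt (fun x : ℝ => (1 / Real.cosh (a * x)) ^ n * Real.sinh (a * x) / Real.cosh (a * x))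
      (a * (-n * (1 / Real.cosh (a * x)) ^ n + (n + 1) * (1 / Real.cosh (a * x)) ^ (n + 2))) x := by
  have hc : Real.cosh (a * x) ≠ 0 := (Real.cosh_pos _).ne'
  have h0 : HasDerivAt (fun x : ℝ => a * x) a x := by
    simpa using (hasDerivAt_id x).const_mul a
  have h := ((aux_s a x n).mul h0.sinh).div h0.cosh hc
  refine HasDerivAt.congr_deriv h ?_
  have hs := Real.sinh_sq (a * x)
  simp only [Pi.mul_apply]
  rw [pow_add]
  generalize (1 / Real.cosh (a * x)) ^ n = S at *
  field_simp
  rw [hs]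
  ring

/-- Existence of sech-type line solitons for the Kawahara–KP equation. -/
theorem sech_line_soliton_exists (β σ μ ν : ℝ) (hβ : β < 0) (hσ : σ = 1 ∨ σ = -1)
    (r κ p q : ℝ) (hr : r = Real.sqrt (-β / 13)) (hκ : κ = σ * μ ^ 2 + ν)
    (hp : p = κ + 36 * r ^ 4) (hq : q = 105 * r ^ 4) :
    LineWaveODE β κ (fun ξ => p - q * (1 / Real.cosh ((1 / 2) * r * ξ)) ^ 4) := by
  have hb : β = -13 * r ^ 2 := by
    rw [hr, Real.sq_sqrt (by linarith)]; ring
  obtain ⟨a, ha⟩ : ∃ a, a = 1 / 2 * r := ⟨_, rfl⟩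
  have hra : r = 2 * a := by rw [ha]; ring
  rw [← ha]
  let s : ℕ → ℝ → ℝ := fun n x => (1 / Real.cosh (a * x)) ^ n
  let t : ℕ → ℝ → ℝ := fun n x =>
    (1 / Real.cosh (a * x)) ^ n * Real.sinh (a * x) / Real.cosh (a * x)
  have hs : ∀ n x, HasDerivAt (s n) (-(n * a) * t n x) x := fun n x => aux_s a x n
  have ht : ∀ n x, HasDerivAt (t n) (a * (-n * s n x + (n + 1) * s (n + 2) x)) x :=
    fun n x => aux_t a x n
  have d1 : deriv (fun x => p - q * s 4 x) = fun x => 4 * q * a * t 4 x := by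
    funext x
    rw [(((hs 4 x).const_mul q).const_sub p).deriv]
    push_cast; ring
  have d2 : deriv (fun x => 4 * q * a * t 4 x) =
      fun x => 4 * q * a ^ 2 * (-4 * s 4 x + 5 * s 6 x) := by
    funext x
    rw [((ht 4 x).const_mul (4 * q * a)).deriv]
    push_cast; ring
  have d3 : deriv (fun x => 4 * q * a ^ 2 * (-4 * s 4 x + 5 * s 6 x)) =
      fun x => 4 * q * a ^ 3 * (16 * t 4 x + -30 * t 6 x) := by
    funext x
    have h := (((hs 4 x).const_mul (-4)).fun_add ((hs 6 x).const_mul 5)).const_mul (4 * q * a ^ 2)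
    rw [h.deriv]
    push_cast; ring
  have d4 : deriv (fun x => 4 * q * a ^ 3 * (16 * t 4 x + -30 * t 6 x)) =
      fun x => 4 * q * a ^ 4 * (-64 * s 4 x + 260 * s 6 x + -210 * s 8 x) := by
    funext x
    have h := (((ht 4 x).const_mul 16).fun_add ((ht 6 x).const_mul (-30))).const_mul (4 * q * a ^ 3)
    rw [h.deriv]
    push_cast; ring
  have d5 : deriv (fun x => 4 * q * a ^ 4 * (-64 * s 4 x + 260 * s 6 x + -210 * s 8 x)) =
      fun x => 4 * q * a ^ 5 * (256 * t 4 x + -1560 * t 6 x + 1680 * t 8 x) := by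
    funext x
    have h := ((((hs 4 x).const_mul (-64)).fun_add ((hs 6 x).const_mul 260)).fun_add
      ((hs 8 x).const_mul (-210))).const_mul (4 * q * a ^ 4)
    rw [h.deriv]
    push_cast; ring
  intro x
  change (p - q * s 4 x) * deriv (fun x => p - q * s 4 x) x
    - κ * deriv (fun x => p - q * s 4 x) x
    + β * deriv (deriv (deriv (fun x => p - q * s 4 x))) x
    + deriv (deriv (deriv (deriv (deriv (fun x => p - q * s 4 x))))) x = 0
  rw [d1, d2, d3, d4, d5]
  have e : s 4 x * t 4 x = t 8 x := by
    simp only [s, t]; ring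
  simp only []
  rw [← e, hp, hq, hb, hra]
  ring
end

section
/- Uniqueness of sech-type line solitons within the sech ansatz: let β ≠ 0, κ ∈ ℝ, m > 0, and a₀, a₁, a₂ ∈ ℝ with (a₁, a₂) ≠ (0, 0). If the function U(ξ) := a₀ + a₁·sech(m·ξ)² + a₂·sech(m·ξ)⁴ satisfies the line-wave ODE U·U' - κ·U' + β·U''' + U⁽⁵⁾ = 0 on all of ℝ, then necessarily a₁ = 0, β = -52·m² (in particular β < 0), a₂ = -1680·m⁴, and a₀ = κ + 576·m⁴. -/
lemma sechaux_S (m x : ℝ) : HasDerivAt (fun ξ => 1 / Real.cosh (m * ξ))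
    (-m * (1 / Real.cosh (m * x)) * Real.tanh (m * x)) x := by
  have h1 : HasDerivAt (fun ξ : ℝ => m * ξ) m x := by
    simpa using (hasDerivAt_id x).const_mul m
  have h := (hasDerivAt_const x (1:ℝ)).div h1.cosh (Real.cosh_pos (m * x)).ne'
  refine h.congr_deriv ?_
  have := (Real.cosh_pos (m * x)).ne'
  rw [Real.tanh_eq_sinh_div_cosh]
  field_simp
  ring

lemma sechaux_T (m x : ℝ) : HasDerivAt (fun ξ => Real.tanh (m * ξ))
    (m * (1 / Real.cosh (m * x)) ^ 2) x := by
  have h1 : HasDerivAt (fun ξ : ℝ => m * ξ) m x := by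
    simpa using (hasDerivAt_id x).const_mul m
  have h := h1.sinh.div h1.cosh (Real.cosh_pos (m * x)).ne'
  have e : (fun ξ => Real.tanh (m * ξ)) = fun ξ => Real.sinh (m * ξ) / Real.cosh (m * ξ) := by
    funext ξ; rw [Real.tanh_eq_sinh_div_cosh]
  rw [e]
  refine h.congr_deriv ?_
  have := (Real.cosh_pos (m * x)).ne'
  have h2 := Real.cosh_sq (m * x)
  field_simp
  linear_combination m * h2

lemma sechaux_TS (x : ℝ) : Real.tanh x ^ 2 = 1 - (1 / Real.cosh x) ^ 2 := by
  have := (Real.cosh_pos x).ne'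
  have h2 := Real.cosh_sq x
  rw [Real.tanh_eq_sinh_div_cosh]
  field_simp
  linear_combination -h2

/-- even polynomial in sech -/
noncomputable def sechauxE (m a b c d e : ℝ) : ℝ → ℝ := fun ξ =>
  a + b * (1 / Real.cosh (m * ξ)) ^ 2 + c * (1 / Real.cosh (m * ξ)) ^ 4
    + d * (1 / Real.cosh (m * ξ)) ^ 6 + e * (1 / Real.cosh (m * ξ)) ^ 8

/-- tanh times even polynomial in sech -/
noncomputable def sechauxO (m b c d e : ℝ) : ℝ → ℝ := fun ξ =>
  -m * Real.tanh (m * ξ) * (2 * b * (1 / Real.cosh (m * ξ)) ^ 2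
    + 4 * c * (1 / Real.cosh (m * ξ)) ^ 4
    + 6 * d * (1 / Real.cosh (m * ξ)) ^ 6 + 8 * e * (1 / Real.cosh (m * ξ)) ^ 8)

lemma sechaux_dE (m a b c d e : ℝ) : deriv (sechauxE m a b c d e) = sechauxO m b c d e := by
  funext x
  have h := sechaux_S m x
  have := (((((h.pow 2).const_mul b).const_add a).add ((h.pow 4).const_mul c)).add
    ((h.pow 6).const_mul d)).add ((h.pow 8).const_mul e)
  refine HasDerivAt.deriv (this.congr_deriv ?_)
  unfold sechauxO
  push_cast
  ring

lemma sechaux_dO (m b c d : ℝ) : deriv (sechauxO m b c d 0) =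
    sechauxE m 0 (4 * m ^ 2 * b) (m ^ 2 * (16 * c - 6 * b)) (m ^ 2 * (36 * d - 20 * c))
      (m ^ 2 * (- 42 * d)) := by
  funext x
  have h := sechaux_S m x
  have := ((sechaux_T m x).const_mul (-m)).mul
    (((((h.pow 2).const_mul (2 * b))).add ((h.pow 4).const_mul (4 * c))).add
    ((h.pow 6).const_mul (6 * d)) |>.add ((h.pow 8).const_mul (8 * 0)))
  refine HasDerivAt.deriv (this.congr_deriv ?_)
  unfold sechauxE
  have h2 := sechaux_TS (m * x)
  simp only [Pi.add_apply, Pi.pow_apply, Pi.mul_apply]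
  push_cast
  generalize (1 / Real.cosh (m * x)) = S at *
  generalize Real.tanh (m * x) = T at *
  linear_combination (m ^ 2 * (4 * b * S ^ 2 + 16 * c * S ^ 4 + 36 * d * S ^ 6)) * h2

/-- Uniqueness of sech-type line solitons within the sech ansatz. -/
theorem sech_line_soliton_unique (β κ m a₀ a₁ a₂ : ℝ) (hβ : β ≠ 0) (hm : 0 < m)
    (ha : (a₁, a₂) ≠ (0, 0))
    (hODE : LineWaveODE β κ
      (fun ξ => a₀ + a₁ * (1 / Real.cosh (m * ξ)) ^ 2
        + a₂ * (1 / Real.cosh (m * ξ)) ^ 4)) :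
    a₁ = 0 ∧ β = -52 * m ^ 2 ∧ a₂ = -1680 * m ^ 4 ∧ a₀ = κ + 576 * m ^ 4 := by
  have hU : (fun ξ => a₀ + a₁ * (1 / Real.cosh (m * ξ)) ^ 2
        + a₂ * (1 / Real.cosh (m * ξ)) ^ 4) = sechauxE m a₀ a₁ a₂ 0 0 := by
    funext x; simp [sechauxE]
  rw [hU] at hODE
  have key : ∀ c : ℝ, 1 < c → 
      (a₀ - κ) * a₁ + 4 * β * m ^ 2 * a₁ + 16 * m ^ 4 * a₁
      + (a₁ ^ 2 + 2 * a₂ * (a₀ - κ) + 2 * β * m ^ 2 * (-6 * a₁ + 16 * a₂)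
        + 2 * m ^ 4 * (-120 * a₁ + 256 * a₂)) * (1 / c) ^ 2
      + (3 * a₁ * a₂ - 60 * β * m ^ 2 * a₂ + 3 * m ^ 4 * (120 * a₁ - 1040 * a₂)) * (1 / c) ^ 4
      + (2 * a₂ ^ 2 + 3360 * m ^ 4 * a₂) * (1 / c) ^ 6 = 0 := by
    intro c hc
    have h := hODE (Real.arcosh c / m)
    simp only [Function.iterate_succ, Function.iterate_zero, Function.comp, id] at h
    rw [sechaux_dE, sechaux_dO, sechaux_dE] at h
    have h42 : m ^ 2 * (-42 * 0) = 0 := by ring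
    rw [h42, sechaux_dO, sechaux_dE] at h
    unfold sechauxE sechauxO at h
    have hx : m * (Real.arcosh c / m) = Real.arcosh c := by field_simp
    have hT := sechaux_TS (Real.arcosh c)
    rw [hx, Real.cosh_arcosh hc.le] at h
    rw [Real.cosh_arcosh hc.le] at hT
    have hc0 : (1 / c) ≠ 0 := by positivity
    have hc1 : (1 / c) ^ 2 < 1 := by
      rw [div_pow, div_lt_one (by positivity)]; nlinarith
    have hT0 : Real.tanh (Real.arcosh c) ≠ 0 := by
      intro h0; rw [h0] at hT; nlinarith
    generalize (1 / c) = S at *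
    generalize Real.tanh (Real.arcosh c) = T at *
    have hne : -2 * m * T * S ^ 2 ≠ 0 := by
      have := hm.ne'
      positivity
    apply mul_left_cancel₀ hne
    linear_combination h
  have k2 := key 2 (by norm_num)
  have k3 := key 3 (by norm_num)
  have k4 := key 4 (by norm_num)
  have k5 := key 5 (by norm_num)
  clear key hODE hU
  obtain ⟨e0, e1, e2, e3⟩ : 
      (a₀ - κ) * a₁ + 4 * β * m ^ 2 * a₁ + 16 * m ^ 4 * a₁ = 0 ∧
      (a₁ ^ 2 + 2 * a₂ * (a₀ - κ) + 2 * β * m ^ 2 * (-6 * a₁ + 16 * a₂)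
        + 2 * m ^ 4 * (-120 * a₁ + 256 * a₂)) = 0 ∧
      (3 * a₁ * a₂ - 60 * β * m ^ 2 * a₂ + 3 * m ^ 4 * (120 * a₁ - 1040 * a₂)) = 0 ∧
      (2 * a₂ ^ 2 + 3360 * m ^ 4 * a₂) = 0 := by
    generalize (a₀ - κ) * a₁ + 4 * β * m ^ 2 * a₁ + 16 * m ^ 4 * a₁ = A at *
    generalize (a₁ ^ 2 + 2 * a₂ * (a₀ - κ) + 2 * β * m ^ 2 * (-6 * a₁ + 16 * a₂)
        + 2 * m ^ 4 * (-120 * a₁ + 256 * a₂)) = B at *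
    generalize (3 * a₁ * a₂ - 60 * β * m ^ 2 * a₂
      + 3 * m ^ 4 * (120 * a₁ - 1040 * a₂)) = C at *
    generalize (2 * a₂ ^ 2 + 3360 * m ^ 4 * a₂) = D at *
    norm_num at k2 k3 k4 k5
    refine ⟨?_, ?_, ?_, ?_⟩ <;> linarith
  clear k2 k3 k4 k5
  have hm4 : m ^ 4 ≠ 0 := by positivity
  have hm2 : m ^ 2 ≠ 0 := by positivity
  have h2 : a₂ ≠ 0 := by
    intro h0
    subst h0
    have : m ^ 4 * a₁ = 0 := by linear_combination e2 / 360
    rcases mul_eq_zero.1 this with h | h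
    · exact hm4 h
    · exact ha (by rw [h])
  have ha2 : a₂ = -1680 * m ^ 4 := by
    apply mul_left_cancel₀ h2
    linear_combination e3 / 2
  subst ha2
  have ha1 : 13 * a₁ = 280 * m ^ 2 * (β + 52 * m ^ 2) := by
    apply mul_left_cancel₀ hm4
    linear_combination -e2 / 360
  have h1 : a₁ = 0 := by
    by_contra hne
    have hk : a₀ - κ = -4 * β * m ^ 2 - 16 * m ^ 4 := by
      apply mul_left_cancel₀ hne
      linear_combination e0
    have ha1' : a₁ = 280 / 13 * m ^ 2 * (β + 52 * m ^ 2) := by linarith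
    rw [hk, ha1'] at e1
    have : m ^ 4 * (31 * (β + 52 * m ^ 2 - 78 * m ^ 2) ^ 2 + 6084 * m ^ 4) = 0 := by
      linear_combination 169 / 1120 * e1
    have : 0 < m ^ 4 * (31 * (β + 52 * m ^ 2 - 78 * m ^ 2) ^ 2 + 6084 * m ^ 4) := by positivity
    linarith
  subst h1
  have hb : β = -52 * m ^ 2 := by
    apply mul_left_cancel₀ hm2
    linear_combination -ha1 / 280
  refine ⟨rfl, hb, rfl, ?_⟩
  apply mul_left_cancel₀ hm4
  rw [hb] at e1
  linear_combination -e1 / 3360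
end

section
/- Zero-background solitary wave of the Kawahara equation: let β < 0 and set c := -(36/169)·β². Then the function u(t,x) := -(105/169)·β²·sech( √(-β/52)·(x - c·t) )⁴ is a smooth solution of the Kawahara equation u_t + u·u_x + β·u_xxx + u_xxxxx = 0 at every point (t,x) ∈ ℝ². -/
/-- Partial derivative in `t` of a function `u (t, x)` given in curried form. -/
noncomputable def pt2 (u : ℝ → ℝ → ℝ) : ℝ → ℝ → ℝ :=
  fun t x => deriv (fun s => u s x) t

/-- Partial derivative in `x` of a function `u (t, x)` given in curried form. -/
noncomputable def px2 (u : ℝ → ℝ → ℝ) : ℝ → ℝ → ℝ :=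
  fun t x => deriv (fun s => u t s) x

theorem kw_S (k y : ℝ) (n : ℕ) : HasDerivAt (fun z : ℝ => (1 / Real.cosh z) ^ n)
    (-(n : ℝ) * ((1 / Real.cosh y) ^ n * (Real.sinh y / Real.cosh y))) y := by
  have hp := (Real.cosh_pos y).ne'
  have h := ((Real.hasDerivAt_cosh y).inv hp).pow n
  simp only [one_div]
  refine h.congr_deriv ?_
  cases n with
  | zero => simp
  | succ m =>
    simp only [Nat.add_sub_cancel, Pi.inv_apply]
    rw [pow_succ (Real.cosh y)⁻¹ m]
    field_simp

theorem kw_T (y : ℝ) : HasDerivAt (fun z : ℝ => Real.sinh z / Real.cosh z)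
    ((1 / Real.cosh y) ^ 2) y := by
  have hp := (Real.cosh_pos y).ne'
  refine ((Real.hasDerivAt_sinh y).div (Real.hasDerivAt_cosh y) hp).congr_deriv ?_
  field_simp
  nlinarith [Real.cosh_sq y]

theorem kw_T2 (y : ℝ) : (Real.sinh y / Real.cosh y) ^ 2 = 1 - (1 / Real.cosh y) ^ 2 := by
  have hp := (Real.cosh_pos y).ne'
  field_simp
  nlinarith [Real.cosh_sq y]

noncomputable def kwE (a b d z : ℝ) : ℝ :=
  a * (1 / Real.cosh z) ^ 4 + b * (1 / Real.cosh z) ^ 6 + d * (1 / Real.cosh z) ^ 8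

noncomputable def kwO (a b d z : ℝ) : ℝ := kwE a b d z * (Real.sinh z / Real.cosh z)

theorem kw_E (a b d y : ℝ) : HasDerivAt (kwE a b d) (kwO (-4 * a) (-6 * b) (-8 * d) y) y := by
  refine ((((kw_S 0 y 4).const_mul a).add ((kw_S 0 y 6).const_mul b)).add
    ((kw_S 0 y 8).const_mul d)).congr_deriv ?_
  simp only [kwO, kwE]
  push_cast
  ring

theorem kw_O (a b y : ℝ) :
    HasDerivAt (kwO a b 0) (kwE (-4 * a) (5 * a - 6 * b) (7 * b) y) y := by
  refine ((kw_E a b 0 y).mul (kw_T y)).congr_deriv ?_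
  have h2 := kw_T2 y
  simp only [kwO, kwE]
  generalize Real.sinh y / Real.cosh y = T at *
  generalize 1 / Real.cosh y = S at *
  linear_combination (-4 * a * S ^ 4 - 6 * b * S ^ 6) * h2

theorem kw_px (k c t x : ℝ) (f : ℝ → ℝ) (f' : ℝ)
    (h : HasDerivAt f f' (k * (x - c * t))) :
    HasDerivAt (fun s => f (k * (s - c * t))) (f' * k) x := by
  have h1 : HasDerivAt (fun s : ℝ => k * (s - c * t)) (k * 1) x :=
    ((hasDerivAt_id x).sub_const _).const_mul k
  exact (h.comp x h1).congr_deriv (by ring)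

theorem kw_pt (k c t x : ℝ) (f : ℝ → ℝ) (f' : ℝ)
    (h : HasDerivAt f f' (k * (x - c * t))) :
    HasDerivAt (fun s => f (k * (x - c * s))) (f' * (k * -(c * 1))) t := by
  have h1 : HasDerivAt (fun s : ℝ => k * (x - c * s)) (k * -(c * 1)) t :=
    (((hasDerivAt_id t).const_mul c).const_sub x).const_mul k
  exact h.comp t h1

theorem kw_pxE (k c a b d : ℝ) : px2 (fun t x => kwE a b d (k * (x - c * t))) =
    fun t x => kwO (-4 * a * k) (-6 * b * k) (-8 * d * k) (k * (x - c * t)) := by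
  funext t x
  refine (kw_px k c t x _ _ (kw_E a b d _)).deriv.trans ?_
  simp only [kwO, kwE]; ring

theorem kw_pxO (k c a b d : ℝ) (hd : d = 0) :
    px2 (fun t x => kwO a b d (k * (x - c * t))) =
    fun t x => kwE (-4 * a * k) ((5 * a - 6 * b) * k) (7 * b * k) (k * (x - c * t)) := by
  subst hd
  funext t x
  refine (kw_px k c t x _ _ (kw_O a b _)).deriv.trans ?_
  simp only [kwE]; ring

/-- Zero-background solitary wave of the Kawahara equation:
with `c = -(36/169)·β²`, the function
`u(t,x) = -(105/169)·β²·sech(√(-β/52)·(x - c·t))⁴`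
is a smooth solution of `u_t + u·u_x + β·u_xxx + u_xxxxx = 0`. -/
theorem kawahara_zero_background_soliton (β c : ℝ) (hβ : β < 0)
    (hc : c = -(36 / 169) * β ^ 2)
    (u : ℝ → ℝ → ℝ)
    (hu : u = fun t x =>
      -(105 / 169) * β ^ 2 * (1 / Real.cosh (Real.sqrt (-β / 52) * (x - c * t))) ^ 4) :
    ContDiff ℝ (⊤ : ℕ∞) (fun q : ℝ × ℝ => u q.1 q.2) ∧
      ∀ t x : ℝ,
        pt2 u t x + u t x * px2 u t x + β * px2 (px2 (px2 u)) t x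
          + px2 (px2 (px2 (px2 (px2 u)))) t x = 0 := by
  have hk : Real.sqrt (-β / 52) ^ 2 = -β / 52 := Real.sq_sqrt (by linarith)
  generalize Real.sqrt (-β / 52) = k at *
  constructor
  · subst hu
    have h : ContDiff ℝ (⊤ : ℕ∞) (fun q : ℝ × ℝ => Real.cosh (k * (q.2 - c * q.1))) :=
      Real.contDiff_cosh.comp (by fun_prop)
    exact contDiff_const.mul ((contDiff_const.div h fun q => (Real.cosh_pos _).ne').pow 4)
  · intro t x
    have hu' : u = fun t x => kwE (-(105 / 169) * β ^ 2) 0 0 (k * (x - c * t)) := by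
      rw [hu]; funext t x; simp [kwE]
    have hpt : pt2 u t x = kwO (-4 * (-(105 / 169) * β ^ 2)) (-6 * 0) (-8 * 0) (k * (x - c * t)) *
        (k * -(c * 1)) := by
      rw [hu']
      exact (kw_pt k c t x _ _ (kw_E _ 0 0 _)).deriv
    rw [hpt, hu', kw_pxE, kw_pxO _ _ _ _ _ (by ring), kw_pxE, kw_pxO _ _ _ _ _ (by ring), kw_pxE]
    have hb : β = -52 * k ^ 2 := by linarith
    subst hc
    simp only [kwO, kwE]
    generalize k * (x - -(36 / 169) * β ^ 2 * t) = y
    subst hb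
    ring
end

section
/- The rescaled solitary-wave profile identity: the function W(ξ) := sech(ξ)⁴ satisfies (1/1680)·W''''(ξ) - (13/420)·W''(ξ) + (12/35)·W(ξ) = (1/2)·W(ξ)² for every ξ ∈ ℝ. -/
lemma sech_hd (n : ℕ) (x : ℝ) :
    HasDerivAt (fun ξ => (1 / Real.cosh ξ) ^ (n + 1))
      (-(n + 1) * Real.sinh x * (1 / Real.cosh x) ^ (n + 2)) x := by
  have hc : Real.cosh x ≠ 0 := (Real.cosh_pos x).ne'
  have h := (((hasDerivAt_const x (1 : ℝ)).div (Real.hasDerivAt_cosh x) hc).pow (n + 1))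
  refine h.congr_deriv ?_
  simp only [Pi.div_apply, Nat.add_sub_cancel]
  push_cast
  rw [pow_add _ n 2]
  field_simp
  ring

lemma sech_hd2 (n : ℕ) (x : ℝ) :
    HasDerivAt (fun ξ => -((n : ℝ) + 1) * Real.sinh ξ * (1 / Real.cosh ξ) ^ (n + 2))
      (((n : ℝ) + 1) ^ 2 * (1 / Real.cosh x) ^ (n + 1)
        - ((n : ℝ) + 1) * (n + 2) * (1 / Real.cosh x) ^ (n + 3)) x := by
  have hc : Real.cosh x ≠ 0 := (Real.cosh_pos x).ne'
  have h := ((Real.hasDerivAt_sinh x).const_mul (-((n : ℝ) + 1))).mul (sech_hd (n + 1) x)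
  refine h.congr_deriv ?_
  have e := Real.cosh_sq x
  have e' : Real.sinh x ^ 2 = Real.cosh x ^ 2 - 1 := by linarith
  push_cast
  have p1 : (1 / Real.cosh x) ^ (n + 1 + 1) = (1 / Real.cosh x) ^ (n + 3) * Real.cosh x := by
    rw [pow_succ _ (n + 2)]; field_simp
  have p2 : (1 / Real.cosh x) ^ (n + 1) = (1 / Real.cosh x) ^ (n + 3) * Real.cosh x ^ 2 := by
    rw [pow_add _ (n + 1) 2]; field_simp
  have p3 : (1 / Real.cosh x) ^ (n + 1 + 2) = (1 / Real.cosh x) ^ (n + 3) := rfl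
  rw [p1, p2, p3]
  linear_combination ((n : ℝ) + 1) * (n + 2) * (1 / Real.cosh x) ^ (n + 3) * e'

/-- The rescaled solitary-wave profile identity: `W(ξ) = sech(ξ)⁴` satisfies
`(1/1680)·W'''' - (13/420)·W'' + (12/35)·W = (1/2)·W²`. -/
theorem rescaled_profile_identity
    (W : ℝ → ℝ) (hW : W = fun ξ => (1 / Real.cosh ξ) ^ 4) :
    ∀ ξ : ℝ,
      (1 / 1680) * deriv^[4] W ξ - (13 / 420) * deriv^[2] W ξ
        + (12 / 35) * W ξ = (1 / 2) * W ξ ^ 2 := by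
  intro ξ
  have d1 : deriv W = fun x => -(((3 : ℕ) : ℝ) + 1) * Real.sinh x * (1 / Real.cosh x) ^ (3 + 2) := by
    rw [hW]; exact funext fun x => (sech_hd 3 x).deriv
  have d2 : deriv (deriv W) = fun x => (((3 : ℕ) : ℝ) + 1) ^ 2 * (1 / Real.cosh x) ^ (3 + 1)
        - (((3 : ℕ) : ℝ) + 1) * ((3 : ℕ) + 2) * (1 / Real.cosh x) ^ (5 + 1) := by
    rw [d1]; exact funext fun x => (sech_hd2 3 x).deriv
  have d3 : deriv (deriv (deriv W)) = fun x =>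
      (((3 : ℕ) : ℝ) + 1) ^ 2 * (-(((3 : ℕ) : ℝ) + 1) * Real.sinh x * (1 / Real.cosh x) ^ (3 + 2))
        - (((3 : ℕ) : ℝ) + 1) * ((3 : ℕ) + 2) *
          (-(((5 : ℕ) : ℝ) + 1) * Real.sinh x * (1 / Real.cosh x) ^ (5 + 2)) := by
    rw [d2]
    exact funext fun x => (((sech_hd 3 x).const_mul _).sub ((sech_hd 5 x).const_mul _)).deriv
  have d4 := (((sech_hd2 3 ξ).const_mul ((((3 : ℕ) : ℝ) + 1) ^ 2)).sub
    ((sech_hd2 5 ξ).const_mul ((((3 : ℕ) : ℝ) + 1) * ((3 : ℕ) + 2)))).deriv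
  have d5 : deriv (deriv (deriv (deriv W))) ξ = _ := (congrArg (fun f => deriv f ξ) d3).trans d4
  simp only [Function.iterate_succ, Function.iterate_zero, Function.comp, id]
  rw [d5, d2, hW]
  push_cast
  ring
end

section
/- Maximal speed of zero-background line solitons in the case σ = 1: let β be a real constant with k := 36·β²/169 > 2, and define c : (-π/2, π/2) → ℝ by c(θ) := -k·cos(θ) - sin(θ)²/cos(θ). Then c(θ) ≤ -2·√(k - 1) for all θ ∈ (-π/2, π/2), and equality holds exactly when θ = arctan(√(k - 2)) or θ = -arctan(√(k - 2)). -/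
open Real

/-- Maximal speed of zero-background line solitons in the case `σ = 1`. -/
theorem max_speed_zero_background (β k : ℝ) (hk : k = 36 * β ^ 2 / 169)
    (hk2 : 2 < k)
    (c : ℝ → ℝ) (hc : c = fun θ => -k * Real.cos θ - Real.sin θ ^ 2 / Real.cos θ) :
    ∀ θ ∈ Set.Ioo (-(π / 2)) (π / 2),
      c θ ≤ -2 * Real.sqrt (k - 1) ∧
        (c θ = -2 * Real.sqrt (k - 1) ↔
          θ = Real.arctan (Real.sqrt (k - 2)) ∨
            θ = -Real.arctan (Real.sqrt (k - 2))) := by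
  intro θ hθ
  have hC : 0 < Real.cos θ := Real.cos_pos_of_mem_Ioo hθ
  have hs2 : Real.sqrt (k - 1) ^ 2 = k - 1 := Real.sq_sqrt (by linarith)
  have hs0 : 0 ≤ Real.sqrt (k - 1) := Real.sqrt_nonneg _
  have hr2 : Real.sqrt (k - 2) ^ 2 = k - 2 := Real.sq_sqrt (by linarith)
  have hSC := Real.sin_sq_add_cos_sq θ
  have key : c θ = -2 * Real.sqrt (k - 1)
      - (Real.sqrt (k - 1) * Real.cos θ - 1) ^ 2 / Real.cos θ := by
    have hS : Real.sin θ ^ 2 = 1 - Real.cos θ ^ 2 := by linarith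
    rw [hc]
    simp only [hS]
    field_simp
    linear_combination Real.cos θ ^ 2 * hs2
  have hpos : 0 ≤ (Real.sqrt (k - 1) * Real.cos θ - 1) ^ 2 / Real.cos θ := by positivity
  refine ⟨by linarith, ?_⟩
  have htan : Real.tan θ * Real.cos θ = Real.sin θ := Real.tan_mul_cos hC.ne'
  have h1 : c θ = -2 * Real.sqrt (k - 1) ↔ Real.sqrt (k - 1) * Real.cos θ = 1 := by
    constructor
    · intro h
      have h0 : (Real.sqrt (k - 1) * Real.cos θ - 1) ^ 2 / Real.cos θ = 0 := by linarith
      rw [div_eq_zero_iff] at h0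
      rcases h0 with h0 | h0
      · have := pow_eq_zero_iff (two_ne_zero) |>.1 h0
        linarith
      · exact absurd h0 hC.ne'
    · intro h
      rw [key, h]; simp
  have h2 : Real.sqrt (k - 1) * Real.cos θ = 1 ↔ Real.tan θ ^ 2 = Real.sqrt (k - 2) ^ 2 := by
    rw [hr2]
    constructor
    · intro h
      have hm : (Real.tan θ ^ 2) * Real.cos θ ^ 2 = (k - 2) * Real.cos θ ^ 2 := by
        rw [← mul_pow, htan]
        linear_combination hSC + Real.cos θ ^ 2 * hs2
          - (Real.sqrt (k - 1) * Real.cos θ + 1) * h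
      exact mul_right_cancel₀ (pow_ne_zero 2 hC.ne') hm
    · intro h
      have hm : (Real.sqrt (k - 1) * Real.cos θ) ^ 2 = 1 := by
        have h3 : Real.sin θ ^ 2 = (k - 2) * Real.cos θ ^ 2 := by
          rw [← htan, mul_pow, h]
        rw [mul_pow, hs2]
        linarith
      have hn : 0 ≤ Real.sqrt (k - 1) * Real.cos θ := by positivity
      nlinarith
  have h3 : ∀ t : ℝ, Real.tan θ = t ↔ θ = Real.arctan t := by
    intro t
    constructor
    · rintro rfl
      exact (Real.arctan_tan hθ.1 hθ.2).symm
    · rintro h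
      rw [h, Real.tan_arctan]
  rw [h1, h2, sq_eq_sq_iff_eq_or_eq_neg, h3, h3, Real.arctan_neg]
end
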